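/- arXiv:2503.03337 — 2 statements merged into one kernel-verified Lean document; each statement's English description precedes it below -/
import Mathlib

section
/- Let L = Σ_{j=0}^r p_j(x) ∂_x^j be a linear differential operator of order r with polynomial coefficients, d_j = deg p_j. Then there exists an operator L̃ = Σ_{j=0}^r q_j(x) 𝔡^j in k[x]⟨𝔡⟩ of order r with the same solution set as L (i.e., L̃ = x^N · L as operators after rewriting, up to a power of x factor making coefficients polynomial), such that deg q_r = d_r and deg q_j ≤ r + max_{ℓ ≥ j}(d_ℓ − ℓ) for all j. -/
open Polynomial

/-- The Euler operator `𝔡 = x ∂_x` as a `k`-linear endomorphism of `k[x]`. -/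
noncomputable def eulerOp (k : Type*) [Field k] : Module.End k (Polynomial k) :=
  LinearMap.mulLeft k (X : Polynomial k) * (derivative : Polynomial k →ₗ[k] Polynomial k)

/-! If `D` is a derivation with `D x = 1`, then `[x D, x ^ n] = n x ^ n`, so that
`(x D - n) x ^ n D ^ n = x ^ (n + 1) D ^ (n + 1)`. Inductively, `x ^ n D ^ n` is the falling
factorial `𝔡 (𝔡 - 1) ⋯ (𝔡 - n + 1)` in the Euler operator `𝔡 = x D`, a monic polynomial of degree
`n` in `𝔡` with constant coefficients. Substituting this into
`x ^ r p_ℓ D ^ ℓ = (x ^ (r - ℓ) p_ℓ) (x ^ ℓ D ^ ℓ)` puts `x ^ r L` into Euler form: the term `ℓ`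
contributes only to the coefficients of `𝔡 ^ j` with `j ≤ ℓ`, and only the term `ℓ = r` contributes
to the leading one. -/

section DescPochhammer

variable (R : Type*) [Ring R]

theorem natDegree_descPochhammer_le (n : ℕ) : (descPochhammer R n).natDegree ≤ n := by
  rw [← descPochhammer_map (Int.castRingHom R) n]
  exact natDegree_map_le.trans (descPochhammer_natDegree ℤ n).le

theorem coeff_descPochhammer_self (n : ℕ) : (descPochhammer R n).coeff n = 1 := by
  have hℤ : (descPochhammer ℤ n).coeff n = 1 := by
    simpa only [descPochhammer_natDegree] using (monic_descPochhammer ℤ n).coeff_natDegree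
  rw [← descPochhammer_map (Int.castRingHom R) n, coeff_map, hℤ, map_one]

variable {R} in
theorem coeff_descPochhammer_of_lt {n j : ℕ} (h : n < j) : (descPochhammer R n).coeff j = 0 :=
  coeff_eq_zero_of_natDegree_lt ((natDegree_descPochhammer_le R n).trans_lt h)

end DescPochhammer

section EulerOperator

variable {R A : Type*} [CommRing R] [CommRing A] [Algebra R A] (D : Derivation R A A) {x : A}

theorem mul_derivation_pow_mul_sub_natCast_mul (hx : D x = 1) (n : ℕ) (a : A) :
    x * D (x ^ n * a) - n * (x ^ n * a) = x ^ (n + 1) * D a := by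
  cases n with
  | zero => simp
  | succ n =>
    simp only [Derivation.leibniz, Derivation.leibniz_pow, hx, smul_eq_mul, nsmul_eq_mul,
      Nat.add_sub_cancel]
    ring

theorem aeval_euler_descPochhammer (hx : D x = 1) (n : ℕ) :
    aeval (LinearMap.mulLeft R x * (D : Module.End R A)) (descPochhammer R n) =
      LinearMap.mulLeft R (x ^ n) * (D : Module.End R A) ^ n := by
  induction n with
  | zero => ext; simp
  | succ n ih =>
    rw [descPochhammer_succ_right, mul_comm, map_mul, ih]
    ext a
    simpa [pow_succ' (D : Module.End R A)] using
      mul_derivation_pow_mul_sub_natCast_mul D hx n (((D : Module.End R A) ^ n) a)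

theorem mulLeft_pow_mul_derivation_pow_eq_sum (hx : D x = 1) {r n : ℕ} (hn : n ≤ r) :
    LinearMap.mulLeft R (x ^ n) * (D : Module.End R A) ^ n =
      ∑ j : Fin (r + 1), (descPochhammer R n).coeff j •
        (LinearMap.mulLeft R x * (D : Module.End R A)) ^ (j : ℕ) := by
  have hdeg : (descPochhammer R n).natDegree < r + 1 :=
    (natDegree_descPochhammer_le R n).trans_lt (Nat.lt_succ_of_le hn)
  rw [← aeval_euler_descPochhammer D hx, aeval_eq_sum_range' hdeg, Finset.sum_range]

theorem mulLeft_pow_mul_mulLeft_mul_derivation_pow (hx : D x = 1) {r n : ℕ} (hn : n ≤ r) (b : A) :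
    LinearMap.mulLeft R (x ^ r) * (LinearMap.mulLeft R b * (D : Module.End R A) ^ n) =
      ∑ j : Fin (r + 1), (descPochhammer R n).coeff j •
        (LinearMap.mulLeft R (x ^ (r - n) * b) *
          (LinearMap.mulLeft R x * (D : Module.End R A)) ^ (j : ℕ)) := by
  have hsplit : x ^ r * b = x ^ (r - n) * b * x ^ n := by
    rw [mul_right_comm, pow_sub_mul_pow x hn]
  calc LinearMap.mulLeft R (x ^ r) * (LinearMap.mulLeft R b * (D : Module.End R A) ^ n)
      = LinearMap.mulLeft R (x ^ (r - n) * b) *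
          (LinearMap.mulLeft R (x ^ n) * (D : Module.End R A) ^ n) := by
        simp only [← mul_assoc]
        simp only [Module.End.mul_eq_comp, ← LinearMap.mulLeft_mul, hsplit]
    _ = _ := by
        rw [mulLeft_pow_mul_derivation_pow_eq_sum D hx hn, Finset.mul_sum]
        simp only [mul_smul_comm]

end EulerOperator

section EulerCoeff

variable {R : Type*} [CommRing R] {r : ℕ} (p : Fin (r + 1) → R[X])

/-- The coefficient `q_j` of `𝔡 ^ j` in `x ^ r * ∑ ℓ, p_ℓ ∂ ^ ℓ`, where `𝔡 = x ∂`: the coefficients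
of the falling factorials are the signed Stirling numbers of the first kind. -/
noncomputable def eulerCoeff (j : Fin (r + 1)) : R[X] :=
  ∑ ℓ : Fin (r + 1), (descPochhammer R ℓ).coeff j • (X ^ (r - (ℓ : ℕ)) * p ℓ)

theorem eulerCoeff_last : eulerCoeff p (Fin.last r) = p (Fin.last r) := by
  have hzero (ℓ : Fin (r + 1)) (hℓ : ℓ ≠ Fin.last r) :
      (descPochhammer R ℓ).coeff (Fin.last r) • (X ^ (r - (ℓ : ℕ)) * p ℓ) = 0 := by
    rw [coeff_descPochhammer_of_lt (Fin.lt_last_iff_ne_last.mpr hℓ), zero_smul]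
  calc eulerCoeff p (Fin.last r)
      = (descPochhammer R r).coeff r • (X ^ (r - r) * p (Fin.last r)) :=
        Fintype.sum_eq_single (Fin.last r) hzero
    _ = p (Fin.last r) := by
        rw [coeff_descPochhammer_self, Nat.sub_self, pow_zero, one_mul, one_smul]

theorem exists_degree_eulerCoeff_le (j : Fin (r + 1)) :
    ∃ ℓ, j ≤ ℓ ∧ (eulerCoeff p j).degree ≤ (r - ℓ : ℕ) + (p ℓ).degree := by
  obtain ⟨ℓ, hjℓ, hmax⟩ := Finset.exists_max_image (Finset.Ici j)
    (fun ℓ ↦ ((r - ℓ : ℕ) : WithBot ℕ) + (p ℓ).degree) Finset.nonempty_Ici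
  refine ⟨ℓ, Finset.mem_Ici.mp hjℓ, (degree_sum_le _ _).trans (Finset.sup_le fun m _ ↦ ?_)⟩
  rcases lt_or_ge m j with hmj | hjm
  · rw [coeff_descPochhammer_of_lt hmj, zero_smul, degree_zero]
    exact bot_le
  · calc ((descPochhammer R m).coeff j • (X ^ (r - (m : ℕ)) * p m)).degree
        ≤ (X ^ (r - (m : ℕ)) * p m).degree := degree_smul_le _ _
      _ ≤ (r - m : ℕ) + (p m).degree :=
        (degree_mul_le _ _).trans (add_le_add_left (degree_X_pow_le _) _)
      _ ≤ (r - ℓ : ℕ) + (p ℓ).degree := hmax m (Finset.mem_Ici.mpr hjm)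

theorem mulLeft_pow_mul_sum_eq_sum_eulerCoeff {A : Type*} [CommRing A] [Algebra R A]
    (D : Derivation R A A) {x : A} (hx : D x = 1) :
    LinearMap.mulLeft R (x ^ r) *
        ∑ ℓ : Fin (r + 1), LinearMap.mulLeft R (aeval x (p ℓ)) * (D : Module.End R A) ^ (ℓ : ℕ) =
      ∑ j : Fin (r + 1), LinearMap.mulLeft R (aeval x (eulerCoeff p j)) *
        (LinearMap.mulLeft R x * (D : Module.End R A)) ^ (j : ℕ) := by
  have hcoeff (j : Fin (r + 1)) :
      LinearMap.mulLeft R (aeval x (eulerCoeff p j)) =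
        ∑ ℓ : Fin (r + 1), (descPochhammer R ℓ).coeff j •
          LinearMap.mulLeft R (x ^ (r - (ℓ : ℕ)) * aeval x (p ℓ)) := by
    ext a
    simp [eulerCoeff, Finset.sum_mul, mul_assoc]
  simp only [hcoeff, Finset.mul_sum, Finset.sum_mul, smul_mul_assoc]
  rw [Finset.sum_comm]
  exact Finset.sum_congr rfl fun ℓ _ ↦
    mulLeft_pow_mul_mulLeft_mul_derivation_pow D hx ℓ.is_le (aeval x (p ℓ))

end EulerCoeff

theorem diffop_to_euler_form_general {R A : Type*} [CommRing R] [CommRing A] [Algebra R A]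
    (D : Derivation R A A) {x : A} (hx : D x = 1) (r : ℕ) (p : Fin (r + 1) → R[X]) :
    ∃ q : Fin (r + 1) → R[X],
      LinearMap.mulLeft R (x ^ r) *
          ∑ j : Fin (r + 1), LinearMap.mulLeft R (aeval x (p j)) * (D : Module.End R A) ^ (j : ℕ) =
        ∑ j : Fin (r + 1), LinearMap.mulLeft R (aeval x (q j)) *
          (LinearMap.mulLeft R x * (D : Module.End R A)) ^ (j : ℕ) ∧
      q (Fin.last r) = p (Fin.last r) ∧
      ∀ j, ∃ ℓ, j ≤ ℓ ∧ (q j).degree ≤ (r - ℓ : ℕ) + (p ℓ).degree :=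
  ⟨eulerCoeff p, mulLeft_pow_mul_sum_eq_sum_eulerCoeff p D hx, eulerCoeff_last p,
    exists_degree_eulerCoeff_le p⟩

/-- Rewriting a linear differential operator `L = ∑_{j=0}^r p_j(x) ∂_x^j` of order `r`
in terms of the Euler operator `𝔡 = x ∂_x`: there is an operator
`L̃ = ∑_{j=0}^r q_j(x) 𝔡^j` of order `r` with the same solution set, namely `L̃ = x^r · L`
as operators, with `deg q_r = deg p_r` and `deg q_j ≤ r + max_{ℓ ≥ j} (deg p_ℓ - ℓ)`. -/
theorem diffop_to_euler_form (k : Type*) [Field k] [CharZero k]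
    (r : ℕ) (p : Fin (r + 1) → Polynomial k) (hpr : p (Fin.last r) ≠ 0) :
    ∃ q : Fin (r + 1) → Polynomial k,
      (LinearMap.mulLeft k ((X : Polynomial k) ^ r)) *
          (∑ j : Fin (r + 1), LinearMap.mulLeft k (p j) *
            ((derivative : Polynomial k →ₗ[k] Polynomial k) : Module.End k (Polynomial k)) ^ (j : ℕ))
        = ∑ j : Fin (r + 1), LinearMap.mulLeft k (q j) * (eulerOp k) ^ (j : ℕ) ∧
      q (Fin.last r) ≠ 0 ∧
      (q (Fin.last r)).natDegree = (p (Fin.last r)).natDegree ∧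
      ∀ j : Fin (r + 1), ∃ ℓ : Fin (r + 1), j ≤ ℓ ∧
        ((q j).natDegree : ℤ) ≤ (r : ℤ) + (p ℓ).natDegree - (ℓ : ℕ) := by
  obtain ⟨q, hop, hlast, hdeg⟩ := diffop_to_euler_form_general derivative' derivative_X r p
  simp only [aeval_X_left_apply] at hop
  refine ⟨q, hop, hlast ▸ hpr, congrArg natDegree hlast, fun j ↦ ?_⟩
  obtain ⟨ℓ, hjℓ, hle⟩ := hdeg j
  have hnat : (q j).natDegree ≤ (r - ℓ) + (p ℓ).natDegree :=
    natDegree_le_of_degree_le (hle.trans (by push_cast; gcongr; exact degree_le_natDegree))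
  exact ⟨ℓ, hjℓ, by omega⟩
end

section
/- Let T ∈ k(x)^{n×n} be a strictly proper rational matrix with an irreducible state-space realisation T = B(xI_m − A)^{-1}C, let Δ ∈ k[x] be a polynomial divisible by all determinantal denominators φ_ℓ(T) (e.g., Δ = det M for a realisation T = XM^{-1}Y), let θ = ∂_x + T, a ∈ k[x]^n, and let 0 ≤ s₁ ≤ … ≤ s_r. Then every determinantal denominator φ_ℓ of the matrix K = [θ^{s₁}a | … | θ^{s_r}a] ∈ k(x)^{n×r} divides Δ^{s_r}. -/
/-!
Write `L = x I - A` and `E = C B`. Since `θ (p + B v) = p' + B (v' + L⁻¹ (C p + E v))`, and since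
`L' = 1` and `E' = 0`, every iterate `θ^j a` has the form `p + B v` with a polynomial vector `p`
and a nested sum `v = L⁻¹ (y₀ + (E - 1) L⁻¹ (y₁ + (E - 2) L⁻¹ (⋯)))` of depth `j` with polynomial
`yᵢ`. Nested sums of depth `N` solve a block triangular polynomial system whose matrix `M` has
determinant `(det L)^N`; this `M` serves all columns of `K` at once, which is why the largest
exponent bounds the denominators rather than the sum of all of them. Taking Schur complements,
every minor of `P + X M⁻¹ Y` is a polynomial divided by `det M`. Finally `det L⁻¹` is a minor of
`L⁻¹`, so irreducibility of the realization gives `det L ∣ Δ`.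
-/

set_option synthInstance.maxHeartbeats 1000000

open Polynomial

/-- The standard derivative on the rational function field `k(x)`. -/
noncomputable def ratDeriv {k : Type*} [Field k] (f : RatFunc k) : RatFunc k :=
  algebraMap (Polynomial k) (RatFunc k)
      (derivative f.num * f.denom - f.num * derivative f.denom) /
    (algebraMap (Polynomial k) (RatFunc k) f.denom) ^ 2

/-- The pseudo-linear map `θ = ∂_x + T` on `k(x)^n`. -/
noncomputable def pseudoLin {k : Type*} [Field k] {n : ℕ}
    (T : Matrix (Fin n) (Fin n) (RatFunc k)) (v : Fin n → RatFunc k) : Fin n → RatFunc k :=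
  (fun i => ratDeriv (v i)) + T.mulVec v

/-- The determinantal denominator `φ_ℓ(R)`: the monic least common denominator in `k[x]`
of all minors of the rational matrix `R` of size at most `ℓ` (with `φ_0(R) = 1`). -/
noncomputable def detDen {k : Type*} [Field k] [DecidableEq k] {m p : ℕ} (ℓ : ℕ)
    (R : Matrix (Fin m) (Fin p) (RatFunc k)) : Polynomial k :=
  (Finset.univ : Finset (Σ s : Fin (ℓ + 1), (Fin (s : ℕ) → Fin m) × (Fin (s : ℕ) → Fin p))).lcm
    (fun t => ((R.submatrix t.2.1 t.2.2).det).denom)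

section Realization

open Matrix

variable {ι κ μ R S : Type*} [Fintype ι] [DecidableEq ι] [CommRing R] [CommRing S] [Algebra R S]

/-- A (polynomial) realization of `Z` with denominator `D`: `Z = P + X M⁻¹ Y` where `P`, `X`, `M`,
`Y` have entries in `R` and `det M = D`. The product `M⁻¹ Y` is encoded as a matrix `W` with
`M W = Y`, so that `M` need not be invertible. -/
def HasRealization (D : R) (Z : Matrix κ μ S) : Prop :=
  ∃ (ν : Type) (_ : Fintype ν) (_ : DecidableEq ν) (M : Matrix ν ν R) (P : Matrix κ μ R)
    (X : Matrix κ ν R) (Y : Matrix ν μ R) (W : Matrix ν μ S),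
    M.det = D ∧ M.map (algebraMap R S) * W = Y.map (algebraMap R S) ∧
      Z = P.map (algebraMap R S) + X.map (algebraMap R S) * W

lemma det_mul_det_add_mul [Fintype κ] [DecidableEq κ] (M : Matrix ι ι R) (P : Matrix κ κ R)
    (X : Matrix κ ι R) (W : Matrix ι κ R) :
    M.det * (P + X * W).det = (fromBlocks M (-(M * W)) X P).det := by
  have factorization : fromBlocks M (-(M * W)) X P * fromBlocks 1 W 0 1 =
      fromBlocks M 0 X (P + X * W) := by
    simp [fromBlocks_multiply, add_comm]
  rw [← det_fromBlocks_zero₁₂, ← factorization, det_mul, det_fromBlocks_zero₂₁]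
  simp only [det_one, mul_one]

namespace HasRealization

lemma zero : HasRealization (1 : R) (0 : Matrix κ μ S) :=
  ⟨Empty, inferInstance, inferInstance, 0, 0, 0, 0, 0, det_isEmpty, by simp, by simp⟩

variable {D : R} {Z : Matrix κ μ S}

lemma submatrix {κ' μ' : Type*} (hZ : HasRealization D Z) (f : κ' → κ) (g : μ' → μ) :
    HasRealization D (Z.submatrix f g) := by
  obtain ⟨ν, _, _, M, P, X, Y, W, hM, hW, rfl⟩ := hZ
  refine ⟨ν, _, _, M, P.submatrix f g, X.submatrix f id, Y.submatrix id g, W.submatrix id g, hM,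
    ?_, rfl⟩
  exact congrArg (·.submatrix id g) hW

lemma map_add_map_mul {τ : Type*} [Fintype κ] (hZ : HasRealization D Z) (Q : Matrix τ μ R)
    (F : Matrix τ κ R) :
    HasRealization D (Q.map (algebraMap R S) + F.map (algebraMap R S) * Z) := by
  obtain ⟨ν, _, _, M, P, X, Y, W, hM, hW, rfl⟩ := hZ
  refine ⟨ν, _, _, M, Q + F * P, F * X, Y, W, hM, hW, ?_⟩
  rw [Matrix.map_add _ (map_add _), Matrix.map_mul, Matrix.map_mul, Matrix.mul_add, add_assoc,
    Matrix.mul_assoc]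

lemma of_map_mul {ι : Type} [Fintype ι] [DecidableEq ι] {V : Matrix ι μ S} {L : Matrix ι ι R}
    (hV : HasRealization D (L.map (algebraMap R S) * V)) : HasRealization (L.det * D) V := by
  obtain ⟨ν, _, _, M, P, X, Y, W, rfl, hW, hV⟩ := hV
  refine ⟨ι ⊕ ν, inferInstance, inferInstance, fromBlocks L (-X) 0 M, 0, fromCols 1 0,
    fromRows P Y, fromRows V W, det_fromBlocks_zero₂₁ .., ?_, ?_⟩
  · have hPY : (fromRows P Y).map (algebraMap R S) =
        fromRows (P.map (algebraMap R S)) (Y.map (algebraMap R S)) := by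
      ext (i | i) j <;> rfl
    have hLV : L.map (algebraMap R S) * V - X.map (algebraMap R S) * W =
        P.map (algebraMap R S) := sub_eq_of_eq_add hV
    rw [hPY, ← hLV, ← hW, fromBlocks_map, ← fromRows_fromCols_eq_fromBlocks, fromRows_mul,
      fromCols_mul_fromRows, fromCols_mul_fromRows]
    simp [Matrix.map_neg, sub_eq_add_neg]
  · rw [fromCols_map]
    simp [fromCols_mul_fromRows]

lemma exists_algebraMap_mul_det_eq [Fintype κ] [DecidableEq κ] {Z : Matrix κ κ S}
    (hZ : HasRealization D Z) : ∃ p : R, algebraMap R S D * Z.det = algebraMap R S p := by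
  obtain ⟨ν, _, _, M, P, X, Y, W, rfl, hW, rfl⟩ := hZ
  refine ⟨(fromBlocks M (-Y) X P).det, ?_⟩
  rw [RingHom.map_det, RingHom.map_det, RingHom.mapMatrix_apply, RingHom.mapMatrix_apply,
    det_mul_det_add_mul, hW, fromBlocks_map, Matrix.map_neg]
  exact map_neg _

end HasRealization

end Realization

section HornerSum

open Matrix

variable {k ι R S : Type*} [Fintype ι] [CommRing k] [CommRing R] [CommRing S] [Algebra k R]
  [Algebra k S] [Algebra R S] {δ : Derivation k R R} {d : Derivation k S S}

lemma derivation_comp_map_mulVec {κ : Type*}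
    (hd : ∀ p, d (algebraMap R S p) = algebraMap R S (δ p))
    (M : Matrix κ ι R) (v : ι → S) :
    d ∘ (M.map (algebraMap R S) *ᵥ v) =
      (M.map δ).map (algebraMap R S) *ᵥ v + M.map (algebraMap R S) *ᵥ (d ∘ v) := by
  ext i
  simp [mulVec, dotProduct, hd, Finset.sum_add_distrib, mul_comm]

variable [DecidableEq ι]

/-- Nested sums `v = L⁻¹ (y₀ + (E - 1) L⁻¹ (y₁ + (E - 2) L⁻¹ (y₂ + ⋯)))` of depth `N`, with the
`yᵢ` in `R`. As for `HasRealization`, `L⁻¹ w` is encoded as a solution of `L v = w`. -/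
def IsHornerSum (L : Matrix ι ι R) : ℕ → Matrix ι ι R → (ι → S) → Prop
  | 0, _, v => v = 0
  | N + 1, E, v => ∃ (y : ι → R) (u : ι → S), IsHornerSum L N (E - 1) u ∧
      L.map (algebraMap R S) *ᵥ v =
        algebraMap R S ∘ y + (E - 1).map (algebraMap R S) *ᵥ u

namespace IsHornerSum

variable {L E : Matrix ι ι R} {N : ℕ} {v : ι → S}

lemma succ (hv : IsHornerSum L N E v) : IsHornerSum L (N + 1) E v := by
  induction N generalizing E v with
  | zero =>
    obtain rfl : v = 0 := hv
    exact ⟨0, 0, rfl, by ext; simp⟩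
  | succ N ih =>
    obtain ⟨y, u, hu, hv⟩ := hv
    exact ⟨y, u, ih hu, hv⟩

lemma mono {N' : ℕ} (hN : N ≤ N') (hv : IsHornerSum L N E v) : IsHornerSum L N' E v :=
  Nat.le_induction hv (fun _ _ => succ) N' hN

lemma hasRealization {ι : Type} {μ : Type*} [Fintype ι] [DecidableEq ι] {L E : Matrix ι ι R}
    {V : Matrix ι μ S} (hV : ∀ j, IsHornerSum L N E (V.col j)) :
    HasRealization (L.det ^ N) V := by
  induction N generalizing E V with
  | zero =>
    obtain rfl : V = 0 := by
      ext i j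
      exact congrFun (hV j) i
    simpa only [pow_zero] using HasRealization.zero
  | succ N ih =>
    choose y u hu hVu using hV
    have hLV : L.map (algebraMap R S) * V = (of y)ᵀ.map (algebraMap R S) +
        (E - 1).map (algebraMap R S) * (of u)ᵀ := by
      ext i j
      exact congrFun (hVu j) i
    rw [pow_succ']
    exact .of_map_mul (hLV ▸ (ih hu).map_add_map_mul _ _)

-- Differentiating `L v = z + (E - 1) u` gives `L v' + E v = z' + (E - 1) (v + u')`, and `v + u'`
-- solves the equation for `w` again, with `u`, `E - 1` and `z` in place of `v`, `E` and `y`.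
lemma of_mulVec_eq (hd : ∀ p, d (algebraMap R S p) = algebraMap R S (δ p))
    (hL : L.map δ = 1) (hE : E.map δ = 0) {w : ι → S}
    (hv : IsHornerSum L N E v) (y : ι → R)
    (hw : L.map (algebraMap R S) *ᵥ w = algebraMap R S ∘ y +
      L.map (algebraMap R S) *ᵥ (d ∘ v) + E.map (algebraMap R S) *ᵥ v) :
    IsHornerSum L (N + 1) E w := by
  induction N generalizing E v w y with
  | zero =>
    obtain rfl : v = 0 := hv
    have hd0 : d ∘ (0 : ι → S) = 0 := funext fun _ => map_zero d
    exact ⟨y, 0, rfl, by simpa [hd0] using hw⟩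
  | succ N ih =>
    obtain ⟨z, u, hu, hv⟩ := hv
    have hE_sub : (E - 1).map δ = 0 := by
      ext i j
      have hEij : δ (E i j) = 0 := congrFun₂ hE i j
      obtain rfl | hij := eq_or_ne i j <;> simp [*]
    have hv_deriv : v + L.map (algebraMap R S) *ᵥ (d ∘ v) =
        algebraMap R S ∘ (δ ∘ z) + (E - 1).map (algebraMap R S) *ᵥ (d ∘ u) := by
      have hadd : d ∘ (algebraMap R S ∘ z + (E - 1).map (algebraMap R S) *ᵥ u) =
          algebraMap R S ∘ (δ ∘ z) + d ∘ ((E - 1).map (algebraMap R S) *ᵥ u) := by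
        ext i
        simp [hd]
      have := congrArg (d ∘ ·) hv
      simpa [hadd, derivation_comp_map_mulVec hd, hL, hE_sub] using this
    refine ⟨y + δ ∘ z, v + d ∘ u, ih hE_sub hu z ?_, ?_⟩
    · rw [mulVec_add, hv]
      abel
    · have hEv : E.map (algebraMap R S) *ᵥ v = (E - 1).map (algebraMap R S) *ᵥ v + v := by
        simp [Matrix.map_sub, sub_mulVec]
      have hyz : algebraMap R S ∘ (y + δ ∘ z) = algebraMap R S ∘ y + algebraMap R S ∘ (δ ∘ z) :=
        funext fun _ => map_add ..
      rw [hw, hEv, hyz, mulVec_add, add_assoc, add_left_comm _ _ v, add_comm _ v, hv_deriv]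
      abel

end IsHornerSum

end HornerSum

section RatFunc

open Matrix

variable {k : Type*} [Field k]

lemma ratDeriv_div (p : k[X]) {q : k[X]} (hq : q ≠ 0) :
    ratDeriv (algebraMap k[X] (RatFunc k) p / algebraMap k[X] (RatFunc k) q) =
      algebraMap k[X] (RatFunc k) (derivative p * q - p * derivative q) /
        algebraMap k[X] (RatFunc k) q ^ 2 := by
  set f := algebraMap k[X] (RatFunc k) p / algebraMap k[X] (RatFunc k) q with hf
  have hfrac : f.num * q = p * f.denom := (RatFunc.num_mul_eq_mul_denom_iff hq).2 hf
  have hfrac_deriv := congrArg derivative hfrac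
  rw [derivative_mul, derivative_mul] at hfrac_deriv
  rw [ratDeriv, div_eq_div_iff (pow_ne_zero 2 (RatFunc.algebraMap_ne_zero f.denom_ne_zero))
    (pow_ne_zero 2 (RatFunc.algebraMap_ne_zero hq))]
  simp only [← map_pow, ← map_mul]
  congr 1
  linear_combination (q * f.denom) * hfrac_deriv -
    (f.denom * derivative q + q * derivative f.denom) * hfrac

lemma ratDeriv_algebraMap (p : k[X]) :
    ratDeriv (algebraMap k[X] (RatFunc k) p) = algebraMap k[X] (RatFunc k) (derivative p) := by
  simpa using ratDeriv_div p one_ne_zero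

lemma ratDeriv_add (f g : RatFunc k) : ratDeriv (f + g) = ratDeriv f + ratDeriv g := by
  induction f using RatFunc.induction_on with | f p q hq => ?_
  induction g using RatFunc.induction_on with | f u v hv => ?_
  have hq' := RatFunc.algebraMap_ne_zero hq
  have hv' := RatFunc.algebraMap_ne_zero hv
  rw [div_add_div _ _ hq' hv', ← map_mul, ← map_mul, ← map_mul, ← map_add,
    ratDeriv_div _ (mul_ne_zero hq hv), ratDeriv_div _ hq, ratDeriv_div _ hv]
  simp only [derivative_mul, map_mul, map_add, map_sub]
  field_simp
  ring

lemma ratDeriv_mul (f g : RatFunc k) : ratDeriv (f * g) = f * ratDeriv g + g * ratDeriv f := by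
  induction f using RatFunc.induction_on with | f p q hq => ?_
  induction g using RatFunc.induction_on with | f u v hv => ?_
  have hq' := RatFunc.algebraMap_ne_zero hq
  have hv' := RatFunc.algebraMap_ne_zero hv
  rw [div_mul_div_comm, ← map_mul, ← map_mul, ratDeriv_div _ (mul_ne_zero hq hv),
    ratDeriv_div _ hq, ratDeriv_div _ hv]
  simp only [derivative_mul, map_mul, map_add, map_sub]
  field_simp
  ring

variable (k) in
/-- `ratDeriv` as a `k`-linear derivation of the field `k(x)`. -/
noncomputable def ratDerivation : Derivation k (RatFunc k) (RatFunc k) :=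
  .mk'
    { toFun := ratDeriv
      map_add' := ratDeriv_add
      map_smul' := fun c f => by
        have hc : ratDeriv (RatFunc.C c) = 0 := by
          simpa using ratDeriv_algebraMap (Polynomial.C c)
        simp [RatFunc.smul_eq_C_mul, ratDeriv_mul, hc] }
    ratDeriv_mul

lemma ratDerivation_algebraMap (p : k[X]) :
    ratDerivation k (algebraMap k[X] (RatFunc k) p) =
      algebraMap k[X] (RatFunc k) (derivative' p) :=
  ratDeriv_algebraMap p

lemma detDen_dvd_iff [DecidableEq k] {m p ℓ : ℕ} {Z : Matrix (Fin m) (Fin p) (RatFunc k)}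
    {D : k[X]} : detDen ℓ Z ∣ D ↔
      ∀ t ≤ ℓ, ∀ (f : Fin t → Fin m) (g : Fin t → Fin p), (Z.submatrix f g).det.denom ∣ D := by
  rw [detDen, Finset.lcm_dvd_iff]
  exact ⟨fun h t ht f g => h ⟨⟨t, Nat.lt_succ_of_le ht⟩, f, g⟩ (Finset.mem_univ _),
    fun h t _ => h _ t.1.is_le _ _⟩

lemma HasRealization.detDen_dvd [DecidableEq k] {m p : ℕ} {Z : Matrix (Fin m) (Fin p) (RatFunc k)}
    {D : k[X]} (hZ : HasRealization D Z) (hD : D ≠ 0) (ℓ : ℕ) : detDen ℓ Z ∣ D := by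
  refine detDen_dvd_iff.2 fun t _ f g => (RatFunc.denom_dvd hD).2 ?_
  obtain ⟨p, hp⟩ := (hZ.submatrix f g).exists_algebraMap_mul_det_eq
  exact ⟨p, by rw [← hp, mul_div_cancel_left₀ _ (RatFunc.algebraMap_ne_zero hD)]⟩

lemma charmatrix_map_algebraMap {ι : Type*} [Fintype ι] [DecidableEq ι] (A : Matrix ι ι k) :
    A.charmatrix.map (algebraMap k[X] (RatFunc k)) =
      (RatFunc.X : RatFunc k) • (1 : Matrix ι ι (RatFunc k)) - A.map RatFunc.C := by
  ext i j
  by_cases h : i = j <;> simp [charmatrix, h]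

lemma charpoly_dvd_detDen_inv [DecidableEq k] {m : ℕ} (A : Matrix (Fin m) (Fin m) k) :
    A.charpoly ∣ detDen m (A.charmatrix.map (algebraMap k[X] (RatFunc k)))⁻¹ := by
  have hdet : (A.charmatrix.map (algebraMap k[X] (RatFunc k)))⁻¹.det =
      (algebraMap k[X] (RatFunc k) A.charpoly)⁻¹ := by
    rw [det_nonsing_inv, Ring.inverse_eq_inv, charpoly, RingHom.map_det, RingHom.mapMatrix_apply]
  have hminor := detDen_dvd_iff.1 (dvd_refl (detDen m
    (A.charmatrix.map (algebraMap k[X] (RatFunc k)))⁻¹)) m le_rfl id id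
  rw [submatrix_id_id, hdet] at hminor
  refine Dvd.dvd.trans ⟨(algebraMap k[X] (RatFunc k) A.charpoly)⁻¹.num, ?_⟩ hminor
  rw [mul_comm, ← one_mul (RatFunc.denom _)]
  refine ((RatFunc.num_mul_eq_mul_denom_iff A.charpoly_monic.ne_zero).2 ?_).symm
  rw [map_one, one_div]

section Krylov

variable {ι : Type*} [Fintype ι] [DecidableEq ι] {n : ℕ} {T : Matrix (Fin n) (Fin n) (RatFunc k)}
  {L : Matrix ι ι k[X]} {B : Matrix (Fin n) ι k[X]} {C : Matrix ι (Fin n) k[X]}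

lemma pseudoLin_algebraMap_add_mulVec (hB : B.map derivative = 0)
    (hT : T = B.map (algebraMap k[X] (RatFunc k)) * (L.map (algebraMap k[X] (RatFunc k)))⁻¹ *
      C.map (algebraMap k[X] (RatFunc k))) (p : Fin n → k[X]) (v : ι → RatFunc k) :
    pseudoLin T (algebraMap k[X] (RatFunc k) ∘ p + B.map (algebraMap k[X] (RatFunc k)) *ᵥ v) =
      algebraMap k[X] (RatFunc k) ∘ (derivative ∘ p) +
        B.map (algebraMap k[X] (RatFunc k)) *ᵥ (ratDerivation k ∘ v +
          (L.map (algebraMap k[X] (RatFunc k)))⁻¹ *ᵥ (algebraMap k[X] (RatFunc k) ∘ (C *ᵥ p) +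
            (C * B).map (algebraMap k[X] (RatFunc k)) *ᵥ v)) := by
  set φ := algebraMap k[X] (RatFunc k)
  have hφC : φ ∘ (C *ᵥ p) = C.map φ *ᵥ (φ ∘ p) := funext (φ.map_mulVec C p)
  have hT_mulVec : T *ᵥ (φ ∘ p + B.map φ *ᵥ v) =
      B.map φ *ᵥ ((L.map φ)⁻¹ *ᵥ (φ ∘ (C *ᵥ p) + (C * B).map φ *ᵥ v)) := by
    simp only [hT, hφC, Matrix.map_mul, mulVec_add, mulVec_mulVec, Matrix.mul_assoc]
  have hderiv : (fun i => ratDeriv ((φ ∘ p + B.map φ *ᵥ v) i)) =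
      φ ∘ (derivative ∘ p) + B.map φ *ᵥ (ratDerivation k ∘ v) := by
    have hBv : ratDerivation k ∘ (B.map φ *ᵥ v) = B.map φ *ᵥ (ratDerivation k ∘ v) := by
      have hB' : B.map (derivative' : Derivation k k[X] k[X]) = 0 := hB
      simpa [hB'] using derivation_comp_map_mulVec ratDerivation_algebraMap B v
    rw [← hBv]
    ext i
    exact (ratDeriv_add _ _).trans (congrArg (· + _) (ratDeriv_algebraMap _))
  rw [pseudoLin, hderiv, hT_mulVec, add_assoc, ← mulVec_add]

lemma exists_iterate_pseudoLin_eq (hL : L.map derivative = 1) (hLdet : L.det ≠ 0)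
    (hB : B.map derivative = 0) (hCB : (C * B).map derivative = 0)
    (hT : T = B.map (algebraMap k[X] (RatFunc k)) * (L.map (algebraMap k[X] (RatFunc k)))⁻¹ *
      C.map (algebraMap k[X] (RatFunc k))) (a : Fin n → k[X]) (N : ℕ) :
    ∃ (p : Fin n → k[X]) (v : ι → RatFunc k), IsHornerSum L N (C * B) v ∧
      (pseudoLin T)^[N] (algebraMap k[X] (RatFunc k) ∘ a) =
        algebraMap k[X] (RatFunc k) ∘ p + B.map (algebraMap k[X] (RatFunc k)) *ᵥ v := by
  induction N with
  | zero => exact ⟨a, 0, rfl, by simp⟩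
  | succ N ih =>
    obtain ⟨p, v, hv, hpv⟩ := ih
    have hLu : IsUnit (L.map (algebraMap k[X] (RatFunc k))).det := by
      rw [← RingHom.mapMatrix_apply, ← RingHom.map_det]
      exact (RatFunc.algebraMap_ne_zero hLdet).isUnit
    rw [Function.iterate_succ_apply', hpv, pseudoLin_algebraMap_add_mulVec hB hT]
    refine ⟨_, _, hv.of_mulVec_eq ratDerivation_algebraMap hL hCB (C *ᵥ p) ?_, rfl⟩
    rw [mulVec_add, mulVec_mulVec, mul_nonsing_inv _ hLu, one_mulVec]
    abel

end Krylov

lemma map_ratFunc_C {κ μ : Type*} (M : Matrix κ μ k) :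
    M.map RatFunc.C = (M.map Polynomial.C).map (algebraMap k[X] (RatFunc k)) := by
  ext i j
  simp

lemma map_derivative_map_C {κ μ : Type*} (M : Matrix κ μ k) :
    (M.map Polynomial.C).map derivative = 0 := by
  ext1
  simp

lemma map_derivative_charmatrix {ι : Type*} [Fintype ι] [DecidableEq ι] (A : Matrix ι ι k) :
    A.charmatrix.map derivative = 1 := by
  ext1 i j
  obtain rfl | h := eq_or_ne i j <;> simp [*]

theorem detDen_krylov_dvd_pow_general [DecidableEq k] {m n r : ℕ}
    {T : Matrix (Fin n) (Fin n) (RatFunc k)}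
    (A : Matrix (Fin m) (Fin m) k) (B : Matrix (Fin n) (Fin m) k) (C : Matrix (Fin m) (Fin n) k)
    {L : Matrix (Fin m) (Fin m) (RatFunc k)}
    (hL : L = (RatFunc.X : RatFunc k) • (1 : Matrix (Fin m) (Fin m) (RatFunc k)) - A.map RatFunc.C)
    (hT : T = B.map RatFunc.C * L⁻¹ * C.map RatFunc.C)
    (a : Fin n → Polynomial k) (s : Fin r → ℕ) (K : Matrix (Fin n) (Fin r) (RatFunc k))
    (hK : K = Matrix.of fun i j =>
      (pseudoLin T)^[s j] (fun idx => algebraMap (Polynomial k) (RatFunc k) (a idx)) i) (ℓ : ℕ) :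
    detDen ℓ K ∣ A.charpoly ^ Finset.univ.sup s := by
  rw [← charmatrix_map_algebraMap] at hL
  subst hL
  rw [map_ratFunc_C, map_ratFunc_C] at hT
  have hCB : (C.map Polynomial.C * B.map Polynomial.C).map derivative = 0 := by
    rw [← Matrix.map_mul, map_derivative_map_C]
  choose p v hv hpv using exists_iterate_pseudoLin_eq (map_derivative_charmatrix A)
    A.charpoly_monic.ne_zero (map_derivative_map_C B) hCB hT a
  have hV : HasRealization (A.charpoly ^ Finset.univ.sup s) (of fun j => v (s j))ᵀ :=
    IsHornerSum.hasRealization fun j => (hv (s j)).mono (Finset.le_sup (Finset.mem_univ j))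
  have hK' : K = (of fun j => p (s j))ᵀ.map (algebraMap k[X] (RatFunc k)) +
      (B.map Polynomial.C).map (algebraMap k[X] (RatFunc k)) * (of fun j => v (s j))ᵀ := by
    rw [hK]
    ext i j
    exact congrFun (hpv (s j)) i
  rw [hK']
  exact (hV.map_add_map_mul _ _).detDen_dvd (pow_ne_zero _ A.charpoly_monic.ne_zero) ℓ

end RatFunc

/-- Let `T` be strictly proper with an irreducible state-space realisation `T = B L⁻¹ C`
(irreducibility encoded by `φ_ℓ(T) = φ_ℓ(L⁻¹)` for all `ℓ`), and let `Δ ∈ k[x]` be divisible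
by all determinantal denominators `φ_ℓ(T)`. Then, for `0 ≤ s₁ ≤ … ≤ s_r`, every determinantal
denominator of the matrix `K = [θ^{s₁} a | ⋯ | θ^{s_r} a]` divides `Δ^{s_r}`. -/
theorem detDen_krylov_dvd_pow (k : Type*) [Field k] [DecidableEq k] [CharZero k] (m n r : ℕ)
    (T : Matrix (Fin n) (Fin n) (RatFunc k))
    (hsp : ∀ i j, T i j = 0 ∨ (T i j).intDegree < 0)
    (A : Matrix (Fin m) (Fin m) k) (B : Matrix (Fin n) (Fin m) k) (C : Matrix (Fin m) (Fin n) k)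
    (L : Matrix (Fin m) (Fin m) (RatFunc k))
    (hL : L = (RatFunc.X : RatFunc k) • (1 : Matrix (Fin m) (Fin m) (RatFunc k)) - A.map RatFunc.C)
    (hLu : IsUnit L.det)
    (hT : T = B.map RatFunc.C * L⁻¹ * C.map RatFunc.C)
    (hirr : ∀ ℓ : ℕ, detDen ℓ T = detDen ℓ L⁻¹)
    (Δ : Polynomial k) (hΔ : ∀ ℓ : ℕ, detDen ℓ T ∣ Δ)
    (a : Fin n → Polynomial k)
    (s : Fin r → ℕ) (hs : Monotone s)
    (K : Matrix (Fin n) (Fin r) (RatFunc k))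
    (hK : K = Matrix.of fun i j =>
      (pseudoLin T)^[s j] (fun idx => algebraMap (Polynomial k) (RatFunc k) (a idx)) i) :
    ∀ ℓ : ℕ, detDen ℓ K ∣ Δ ^ (Finset.univ.sup s) := fun ℓ =>
  (detDen_krylov_dvd_pow_general A B C hL hT a s K hK ℓ).trans <| pow_dvd_pow_of_dvd
    ((charpoly_dvd_detDen_inv A).trans (charmatrix_map_algebraMap A ▸ hL ▸ hirr m ▸ hΔ m)) _
end
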